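/- Let X ⊂ ℝ^d be a non-empty set, α > 0, and let f : ℝ^d → ℝ be a bounded function that is ⌊α⌋-times continuously differentiable on the open δ-neighborhood X^{+δ} of X for some δ > 0. Assume that either (i) α is an integer and ∂^ν f is bounded on X^{+δ} for all multi-indices ν with |ν| = α, or (ii) α is not an integer and, with β = α − ⌊α⌋, for all |ν| = ⌊α⌋ the Hölder seminorm |∂^ν f|_{β,X^{+δ}} is finite. Then |f|_{B^α_{2,∞}(μ)} < ∞ for every finite measure μ on ℝ^d with supp μ ⊂ X. -/

import Mathlib

/-!
With `n = ⌊α⌋` and `β = α - n`, both alternatives say that `D^n f` satisfies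
`‖D^n f(y) - D^n f(z)‖ ≤ C ‖y - z‖^β` on the `δ`-neighbourhood `U` of `X` (boundedness gives `β = 0`).
Applying the mean value theorem `n` times along the line `t ↦ x + t h` gives
`Δ_h^n f(x) = D^n f(x + ξ h)(h, …, h)` for some `ξ ∈ [0, n]` (`exists_fwdDiff_iter_eq`), and the same
at `x + h`. Hence `Δ_h^{n+1} f(x)` is a difference of two such values, of size `O(‖h‖^(n+β))`, as long
as the segment from `x` to `x + (n+1)h` stays in `U` (`abs_deltaIter_le_of_small`). For the
remaining, large `h`, boundedness of `f` gives `|Δ_h^{n+1} f| ≤ 2^{n+1} sup |f| = O(‖h‖^α)`.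
So `|Δ_h^{n+1} f(x)| ≤ K ‖h‖^α` for all `h` and all `x` in the support of `μ`, hence `μ`-almost
everywhere, and integrating against the finite measure `μ` bounds the seminorm.
-/

open MeasureTheory ENNReal NNReal Real Set

noncomputable section

abbrev Euc (d : ℕ) := EuclideanSpace ℝ (Fin d)

/-- `s`-fold difference operator `Δ_h^s`. -/
def deltaIter {d : ℕ} (s : ℕ) (h : Euc d) (f : Euc d → ℝ) : Euc d → ℝ :=
  (fun (g : Euc d → ℝ) (x : Euc d) => g (x + h) - g x)^[s] f

/-- `s`-th modulus of smoothness `ω_{s,L₂(μ)}(f,t)`. -/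
def modSmooth {d : ℕ} (μ : Measure (Euc d)) (s : ℕ) (f : Euc d → ℝ) (t : ℝ) : ℝ≥0∞ :=
  ⨆ h : {h : Euc d // ‖h‖ ≤ t}, eLpNorm (deltaIter s h.1 f) 2 μ

/-- The Besov seminorm `|f|_{B^α_{2,∞}(μ)}`, with `s = ⌊α⌋ + 1`. -/
def besovSeminorm {d : ℕ} (μ : Measure (Euc d)) (α : ℝ) (f : Euc d → ℝ) : ℝ≥0∞ :=
  ⨆ t : {t : ℝ // 0 < t}, ENNReal.ofReal ((t : ℝ) ^ (-α)) * modSmooth μ (⌊α⌋₊ + 1) f (t : ℝ)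

/-- The support of a measure: the complement of the largest open null set. -/
def msupport {E : Type*} [TopologicalSpace E] [MeasurableSpace E] (μ : Measure E) : Set E :=
  {x | ∀ U : Set E, IsOpen U → x ∈ U → μ U ≠ 0}

/-! ### Finite differences and derivatives -/

/-- Mean value theorem for iterated differences with step `1`. The family `F` plays the role of the
successive derivatives of `F 0`. -/
lemma exists_fwdDiff_iter_eq (n : ℕ) : ∀ (F : ℕ → ℝ → ℝ) (a : ℝ),
    (∀ i < n, ∀ t ∈ Icc a (a + n), HasDerivAt (F i) (F (i + 1) t) t) →
    ∃ ξ ∈ Icc a (a + n), (fwdDiff (1 : ℝ))^[n] (F 0) a = F n ξ := by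
  induction n with
  | zero => intro F a _; exact ⟨a, by simp, rfl⟩
  | succ n ih =>
    intro F a hF
    push_cast at hF
    obtain ⟨ξ, hξ, h1⟩ := ih (fun i t => F i (t + 1) - F i t) a (by
      intro i hi t ht
      have h1 := hF i (by omega) t ⟨ht.1, by linarith [ht.2]⟩
      have h2 := hF i (by omega) (t + 1) ⟨by linarith [ht.1], by linarith [ht.2]⟩
      exact (h2.comp_add_const t 1).sub h1)
    have hsub : ∀ t ∈ Icc ξ (ξ + 1), HasDerivAt (F n) (F (n + 1) t) t := fun t ht =>
      hF n (by omega) t ⟨by linarith [ht.1, hξ.1], by linarith [ht.2, hξ.2]⟩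
    obtain ⟨η, hη, h2⟩ := exists_hasDerivAt_eq_slope (F n) (F (n + 1)) (lt_add_one ξ)
      (fun t ht => (hsub t ht).continuousAt.continuousWithinAt)
      (fun t ht => hsub t (Ioo_subset_Icc_self ht))
    refine ⟨η, ⟨by linarith [hη.1, hξ.1], by push_cast; linarith [hη.2, hξ.2]⟩, ?_⟩
    rw [h2, Function.iterate_succ_apply, add_sub_cancel_left, div_one]
    exact h1

lemma deltaIter_line {d : ℕ} (s : ℕ) (h x : Euc d) (f : Euc d → ℝ) (t : ℝ) :
    deltaIter s h f (x + t • h) = (fwdDiff (1 : ℝ))^[s] (fun t : ℝ => f (x + t • h)) t := by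
  induction s generalizing t with
  | zero => rfl
  | succ s ih =>
    have h1 := ih (t + 1)
    rw [add_smul, one_smul, ← add_assoc] at h1
    rw [Function.iterate_succ_apply', fwdDiff, ← h1, ← ih]
    simp only [deltaIter, Function.iterate_succ_apply']

lemma abs_deltaIter_le {d : ℕ} {f : Euc d → ℝ} {M : ℝ} (hM : ∀ x, |f x| ≤ M) (s : ℕ)
    (h x : Euc d) : |deltaIter s h f x| ≤ 2 ^ s * M := by
  induction s generalizing x with
  | zero => simpa [deltaIter] using hM x
  | succ s ih =>
    have : deltaIter (s + 1) h f x = deltaIter s h f (x + h) - deltaIter s h f x := by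
      simp only [deltaIter, Function.iterate_succ_apply']
    rw [this, pow_succ]
    linarith [abs_sub (deltaIter s h f (x + h)) (deltaIter s h f x), ih (x + h), ih x]

lemma hasDerivAt_iteratedFDerivWithin_line {d : ℕ} {f : Euc d → ℝ} {U : Set (Euc d)}
    (hU : IsOpen U) {n : ℕ} (hf : ContDiffOn ℝ n f U) (x h : Euc d) {i : ℕ} (hi : i < n) {t : ℝ}
    (ht : x + t • h ∈ U) :
    HasDerivAt (fun t : ℝ => iteratedFDerivWithin ℝ i f U (x + t • h) (fun _ => h))
      (iteratedFDerivWithin ℝ (i + 1) f U (x + t • h) (fun _ => h)) t := by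
  have h1 := ((hf.differentiableOn_iteratedFDerivWithin (m := i) (by exact_mod_cast hi)
    hU.uniqueDiffOn) _ ht).hasFDerivWithinAt.hasFDerivAt (hU.mem_nhds ht)
  have hl : HasDerivAt (fun t : ℝ => x + t • h) h t := by
    simpa using ((hasDerivAt_id t).smul_const h).const_add x
  have h2 := h1.comp_hasDerivAt t hl
  have h3 := (ContinuousMultilinearMap.apply ℝ (fun _ : Fin i => Euc d) ℝ
    (fun _ => h)).hasFDerivAt.comp_hasDerivAt t h2
  rw [iteratedFDerivWithin_succ_apply_left]
  exact h3

/-- The local estimate: `Δ_h^{n+1} f(x)` is a difference of two values of `D^n f (·)(h, …, h)` at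
points of the segment from `x` to `x + (n+1)h`, so a Hölder bound on `D^n f` gives the rate
`‖h‖^(n+β)`. The exponent `β = 0` is allowed. -/
lemma abs_deltaIter_le_of_small {d : ℕ} {f : Euc d → ℝ} {U : Set (Euc d)}
    (hU : IsOpen U) {n : ℕ} (hf : ContDiffOn ℝ n f U) {C β : ℝ} (hC : 0 ≤ C) (hβ : 0 ≤ β)
    (hH : ∀ y ∈ U, ∀ z ∈ U,
      ‖iteratedFDerivWithin ℝ n f U y - iteratedFDerivWithin ℝ n f U z‖ ≤ C * ‖y - z‖ ^ β)
    (x h : Euc d) (hseg : ∀ t ∈ Icc (0 : ℝ) (n + 1), x + t • h ∈ U) :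
    |deltaIter (n + 1) h f x| ≤ C * (n + 1) ^ β * ‖h‖ ^ (n + β) := by
  set F : ℕ → ℝ → ℝ := fun i t => iteratedFDerivWithin ℝ i f U (x + t • h) (fun _ => h) with hF
  have hF0 : F 0 = fun t : ℝ => f (x + t • h) := by ext t; simp [hF]
  have hder : ∀ a : ℝ, 0 ≤ a → a ≤ 1 → ∀ i < n, ∀ t ∈ Icc a (a + n),
      HasDerivAt (F i) (F (i + 1) t) t := fun a ha ha1 i hi t ht =>
    hasDerivAt_iteratedFDerivWithin_line hU hf x h hi
      (hseg t ⟨ha.trans ht.1, by linarith [ht.2]⟩)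
  obtain ⟨ξ, hξ, e1⟩ := exists_fwdDiff_iter_eq n F 0 (hder 0 le_rfl zero_le_one)
  obtain ⟨η, hη, e2⟩ := exists_fwdDiff_iter_eq n F 1 (hder 1 zero_le_one le_rfl)
  have hξ' : ξ ∈ Icc (0 : ℝ) (n + 1) := ⟨hξ.1, by linarith [hξ.2]⟩
  have hη' : η ∈ Icc (0 : ℝ) (n + 1) := ⟨by linarith [hη.1], by linarith [hη.2]⟩
  have e3 : deltaIter (n + 1) h f x = F n η - F n ξ := by
    have := deltaIter_line (n + 1) h x f 0
    rw [zero_smul, add_zero] at this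
    rw [this, Function.iterate_succ_apply', fwdDiff, ← hF0, zero_add, e1, e2]
  have hdist : ‖(x + η • h) - (x + ξ • h)‖ ≤ (n + 1) * ‖h‖ := by
    rw [add_sub_add_left_eq_sub, ← sub_smul, norm_smul]
    gcongr
    rw [Real.norm_eq_abs, abs_le]
    constructor <;> linarith [hξ'.1, hξ'.2, hη'.1, hη'.2]
  have hval : |F n η - F n ξ| ≤ ‖iteratedFDerivWithin ℝ n f U (x + η • h)
      - iteratedFDerivWithin ℝ n f U (x + ξ • h)‖ * ‖h‖ ^ n := by
    have := (iteratedFDerivWithin ℝ n f U (x + η • h)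
      - iteratedFDerivWithin ℝ n f U (x + ξ • h)).le_opNorm (fun _ => h)
    simpa [hF] using this
  calc |deltaIter (n + 1) h f x| ≤ (C * ((n + 1) * ‖h‖) ^ β) * ‖h‖ ^ n := by
        rw [e3]
        refine hval.trans ?_
        gcongr
        refine (hH _ (hseg _ hη') _ (hseg _ hξ')).trans ?_
        gcongr
    _ = C * (n + 1) ^ β * ‖h‖ ^ (n + β) := by
        rw [Real.mul_rpow (by positivity) (norm_nonneg _),
          Real.rpow_add_of_nonneg (norm_nonneg _) (Nat.cast_nonneg n) hβ, Real.rpow_natCast]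
        ring

/-! ### Passage to the Besov seminorm -/

lemma ae_mem_msupport {d : ℕ} (μ : Measure (Euc d)) : ∀ᵐ x ∂μ, x ∈ msupport μ := by
  refine measure_null_of_locally_null _ fun x hx => ?_
  have hx' : ¬ ∀ U : Set (Euc d), IsOpen U → x ∈ U → μ U ≠ 0 := hx
  push Not at hx'
  obtain ⟨U, hU, hxU, h0⟩ := hx'
  exact ⟨U, mem_nhdsWithin_of_mem_nhds (hU.mem_nhds hxU), h0⟩

lemma besovSeminorm_ne_top_of_bound {d : ℕ} {μ : Measure (Euc d)} [IsFiniteMeasure μ] {α : ℝ}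
    (hα : 0 < α) {f : Euc d → ℝ} {K : ℝ} (hK : 0 ≤ K)
    (hb : ∀ x ∈ msupport μ, ∀ h, |deltaIter (⌊α⌋₊ + 1) h f x| ≤ K * ‖h‖ ^ α) :
    besovSeminorm μ α f ≠ ⊤ := by
  have hle : besovSeminorm μ α f ≤ μ univ ^ (2 : ℝ≥0∞).toReal⁻¹ * ENNReal.ofReal K := by
    refine iSup_le fun ⟨t, ht⟩ => ?_
    have hm : modSmooth μ (⌊α⌋₊ + 1) f t ≤
        μ univ ^ (2 : ℝ≥0∞).toReal⁻¹ * ENNReal.ofReal (K * t ^ α) := by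
      refine iSup_le fun ⟨h, hh⟩ => ?_
      refine eLpNorm_le_of_ae_bound ?_
      filter_upwards [ae_mem_msupport μ] with x hx
      refine (hb x hx h).trans ?_
      gcongr
    refine (mul_le_mul_right hm _).trans (le_of_eq ?_)
    rw [mul_left_comm, ← ENNReal.ofReal_mul (by positivity)]
    congr 2
    rw [mul_left_comm, ← Real.rpow_add ht]
    simp
  refine ne_top_of_le_ne_top (ENNReal.mul_ne_top ?_ ENNReal.ofReal_ne_top) hle
  exact ENNReal.rpow_ne_top_of_nonneg (by positivity) (measure_ne_top μ _)

/-- Proposition: sufficient condition for finite Besov seminorm.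
If `f : ℝ^d → ℝ` is bounded and `⌊α⌋`-times continuously differentiable on the open
`δ`-neighborhood `X^{+δ}` of a non-empty set `X`, and either (i) `α` is an integer and all
partial derivatives of order `α` (equivalently, the `⌊α⌋`-th iterated derivative) are bounded
on `X^{+δ}`, or (ii) `α` is not an integer and all partial derivatives of order `⌊α⌋`
(equivalently, the `⌊α⌋`-th iterated derivative) are `(α - ⌊α⌋)`-Hölder on `X^{+δ}`,
then `|f|_{B^α_{2,∞}(μ)} < ∞` for every finite measure `μ` with `supp μ ⊆ X`. -/
theorem statement_0 {d : ℕ} (X : Set (Euc d)) (hX : X.Nonempty) (α : ℝ) (hα : 0 < α)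
    (f : Euc d → ℝ) (hbdd : ∃ C : ℝ, ∀ x, |f x| ≤ C) (δ : ℝ) (hδ : 0 < δ)
    (hsmooth : ContDiffOn ℝ (⌊α⌋₊ : ℕ∞) f (Metric.thickening δ X))
    (hcase :
      ((∃ k : ℕ, α = k) ∧
        ∃ C : ℝ, ∀ x ∈ Metric.thickening δ X,
          ‖iteratedFDerivWithin ℝ ⌊α⌋₊ f (Metric.thickening δ X) x‖ ≤ C) ∨
      ((¬ ∃ k : ℕ, α = k) ∧
        ∃ C : ℝ≥0, HolderOnWith C (α - ⌊α⌋₊).toNNReal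
          (iteratedFDerivWithin ℝ ⌊α⌋₊ f (Metric.thickening δ X)) (Metric.thickening δ X))) :
    ∀ μ : Measure (Euc d), IsFiniteMeasure μ → msupport μ ⊆ X →
      besovSeminorm μ α f ≠ ⊤ := by
  intro μ _ hsupp
  obtain ⟨M, hM⟩ := hbdd
  have hM0 : 0 ≤ M := (abs_nonneg _).trans (hM 0)
  set n := ⌊α⌋₊ with hn
  set U := Metric.thickening δ X with hUdef
  have hUo : IsOpen U := Metric.isOpen_thickening
  -- Both cases amount to a Hölder bound on `D^n f` with exponent `β = α - n`,
  -- where `β = 0` expresses that `D^n f` has bounded oscillation.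
  obtain ⟨C, β, hC, hβ, hαβ, hH⟩ : ∃ C β : ℝ, 0 ≤ C ∧ 0 ≤ β ∧ α = n + β ∧
      ∀ y ∈ U, ∀ z ∈ U, ‖iteratedFDerivWithin ℝ n f U y - iteratedFDerivWithin ℝ n f U z‖
        ≤ C * ‖y - z‖ ^ β := by
    rcases hcase with ⟨⟨k, hk⟩, C, hC⟩ | ⟨-, C, hC⟩
    · obtain ⟨x₀, hx₀⟩ := hX
      have hC0 : 0 ≤ C := (norm_nonneg _).trans (hC x₀ (Metric.self_subset_thickening hδ X hx₀))
      refine ⟨C + C, 0, by positivity, le_rfl, by simp [hn, hk], fun y hy z hz => ?_⟩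
      rw [Real.rpow_zero, mul_one]
      exact (norm_sub_le _ _).trans (add_le_add (hC y hy) (hC z hz))
    · have hβ : 0 ≤ α - n := sub_nonneg.2 (Nat.floor_le hα.le)
      refine ⟨C, α - n, C.2, hβ, by ring, fun y hy z hz => ?_⟩
      have := hC.dist_le hy hz
      rwa [Real.coe_toNNReal _ hβ, dist_eq_norm, dist_eq_norm] at this
  have hsm : ContDiffOn ℝ n f U := by exact_mod_cast hsmooth
  -- Steps shorter than `ρ` keep the whole segment from `x` to `x + (n+1)h` inside `U`.
  set ρ : ℝ := δ / (n + 1) with hρ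
  have hρ0 : 0 < ρ := by positivity
  have hK1 : 0 ≤ C * (n + 1 : ℝ) ^ β := by positivity
  have hK2 : 0 ≤ 2 ^ (n + 1) * M / ρ ^ α := by positivity
  refine besovSeminorm_ne_top_of_bound hα
    (K := C * (n + 1 : ℝ) ^ β + 2 ^ (n + 1) * M / ρ ^ α) (by positivity) fun x hx h => ?_
  have hnα : 0 ≤ ‖h‖ ^ α := by positivity
  rcases lt_or_ge ‖h‖ ρ with hlt | hge
  · have hseg : ∀ t ∈ Icc (0 : ℝ) (n + 1), x + t • h ∈ U := fun t ht => by
      refine Metric.mem_thickening_iff.2 ⟨x, hsupp hx, ?_⟩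
      rw [dist_eq_norm, add_sub_cancel_left, norm_smul, Real.norm_of_nonneg ht.1]
      rw [hρ, lt_div_iff₀ (by positivity)] at hlt
      nlinarith [ht.2, norm_nonneg h]
    have := abs_deltaIter_le_of_small hUo hsm hC hβ hH x h hseg
    rw [← hαβ] at this
    refine this.trans ?_
    gcongr
    linarith
  · calc |deltaIter (n + 1) h f x| ≤ 2 ^ (n + 1) * M := abs_deltaIter_le hM _ _ _
      _ = 2 ^ (n + 1) * M / ρ ^ α * ρ ^ α := by field_simp
      _ ≤ (C * (n + 1 : ℝ) ^ β + 2 ^ (n + 1) * M / ρ ^ α) * ‖h‖ ^ α := by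
        gcongr
        linarith
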